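/- Let R be a commutative ring with identity, M a unitary R-module, S a multiplicative closed set in R, and N a proper submodule of M such that S(N) ∩ S = ∅. Then N is a primal submodule of M if and only if N_S is a primal submodule of the R_S-module M_S. (In particular, under these hypotheses N_S is a proper submodule of M_S.) -/

import Mathlib

/-- `S(N)` for a submodule `N` of an `R`-module `M`: the set of elements of `R` not prime
to `N`. -/
def notPrimeTo {R : Type*} [CommRing R] {M : Type*} [AddCommGroup M] [Module R M]
    (N : Submodule R M) : Set R :=
  {r : R | ∃ m : M, m ∉ N ∧ r • m ∈ N}

/-- A proper submodule `N` of `M` is *primal* if `S(N)` forms an ideal of `R`. -/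
def IsPrimalSubmodule {R : Type*} [CommRing R] {M : Type*} [AddCommGroup M] [Module R M]
    (N : Submodule R M) : Prop :=
  N ≠ ⊤ ∧ ∃ I : Ideal R, (I : Set R) = notPrimeTo N

theorem primal_iff_add {R : Type*} [CommRing R] {M : Type*} [AddCommGroup M] [Module R M]
    (N : Submodule R M) (hN : N ≠ ⊤) :
    IsPrimalSubmodule N ↔
      ∀ a b, a ∈ notPrimeTo N → b ∈ notPrimeTo N → a + b ∈ notPrimeTo N := by
  constructor
  · rintro ⟨_, I, hI⟩ a b ha hb
    rw [← hI] at *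
    exact I.add_mem ha hb
  · intro h
    refine ⟨hN, ⟨⟨⟨notPrimeTo N, fun {a b} => h a b⟩, ?_⟩, ?_⟩, rfl⟩
    · obtain ⟨m, hm⟩ : ∃ m, m ∉ N := by
        by_contra! hc
        exact hN (Submodule.eq_top_iff'.2 hc)
      exact ⟨m, hm, by simp⟩
    · rintro c x ⟨m, hm, hx⟩
      exact ⟨m, hm, by rw [smul_assoc]; exact N.smul_mem c hx⟩

theorem mk_mem_loc {R : Type*} [CommRing R] {M : Type*} [AddCommGroup M]
    [Module R M] (S : Submonoid R) (N : Submodule R M)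
    (hS : notPrimeTo N ∩ (S : Set R) = ∅) (m : M) (s : S) :
    LocalizedModule.mk m s ∈ N.localized S ↔ m ∈ N := by
  rw [Submodule.mem_localized']
  constructor
  · rintro ⟨n, hn, t, h⟩
    rw [← IsLocalizedModule.mk_eq_mk', LocalizedModule.mk_eq] at h
    obtain ⟨u, hu⟩ := h
    by_contra hm
    have : ((u * t : S) : R) ∈ notPrimeTo N ∩ (S : Set R) := by
      refine ⟨⟨m, hm, ?_⟩, (u * t).2⟩
      have h2 : ((u * t : S) : R) • m = (u : R) • (s : R) • n := by
        rw [Submonoid.coe_mul, mul_smul]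
        exact hu.symm
      rw [h2]
      exact N.smul_mem _ (N.smul_mem _ hn)
    rw [hS] at this
    exact this
  · intro hm
    exact ⟨m, hm, s, (IsLocalizedModule.mk_eq_mk' s m).symm⟩

theorem mk_mem_npt {R : Type*} [CommRing R] {M : Type*} [AddCommGroup M]
    [Module R M] (S : Submonoid R) (N : Submodule R M)
    (hS : notPrimeTo N ∩ (S : Set R) = ∅) (r : R) (s : S) :
    Localization.mk r s ∈ notPrimeTo (N.localized S) ↔ r ∈ notPrimeTo N := by
  constructor
  · rintro ⟨x, hx, h⟩
    induction x using LocalizedModule.induction_on with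
    | _ m t =>
      rw [LocalizedModule.mk_smul_mk, mk_mem_loc S N hS] at h
      rw [mk_mem_loc S N hS] at hx
      exact ⟨m, hx, h⟩
  · rintro ⟨m, hm, h⟩
    refine ⟨LocalizedModule.mk m 1, ?_, ?_⟩
    · rwa [mk_mem_loc S N hS]
    · rwa [LocalizedModule.mk_smul_mk, mk_mem_loc S N hS]

theorem smul_mem_npt {R : Type*} [CommRing R] {M : Type*} [AddCommGroup M]
    [Module R M] (N : Submodule R M) (c r : R) (h : r ∈ notPrimeTo N) :
    c * r ∈ notPrimeTo N := by
  obtain ⟨m, hm, hx⟩ := h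
  exact ⟨m, hm, by rw [mul_smul]; exact N.smul_mem c hx⟩

/-- Theorem 3.11: let `S` be a multiplicative closed set in `R` and `N` a proper submodule
of `M` with `S(N) ∩ S = ∅`.  Then `N_S = N.localized S` is a proper submodule of `M_S`, and
`N` is a primal submodule of `M` iff `N_S` is a primal submodule of the `R_S`-module `M_S`. -/
theorem isPrimalSubmodule_iff_localized {R : Type*} [CommRing R] {M : Type*} [AddCommGroup M]
    [Module R M] (S : Submonoid R) (N : Submodule R M) (hN : N ≠ ⊤)
    (hS : notPrimeTo N ∩ (S : Set R) = ∅) :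
    N.localized S ≠ ⊤ ∧ (IsPrimalSubmodule N ↔ IsPrimalSubmodule (N.localized S)) := by
  have hT : N.localized S ≠ ⊤ := by
    intro h
    refine hN (Submodule.eq_top_iff'.2 fun m => ?_)
    rw [← mk_mem_loc S N hS m 1, h]
    trivial
  refine ⟨hT, ?_⟩
  rw [primal_iff_add N hN, primal_iff_add _ hT]
  constructor
  · intro h a b
    induction a using Localization.induction_on with
    | _ x =>
    induction b using Localization.induction_on with
    | _ y =>
    obtain ⟨a, s⟩ := x
    obtain ⟨b, t⟩ := y
    intro ha hb
    rw [mk_mem_npt S N hS] at ha hb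
    rw [Localization.add_mk, mk_mem_npt S N hS]
    exact h _ _ (smul_mem_npt N _ _ hb) (smul_mem_npt N _ _ ha)
  · intro h a b ha hb
    rw [← mk_mem_npt S N hS _ 1] at ha hb ⊢
    have := h _ _ ha hb
    rwa [Localization.add_mk_self] at this
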